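/- Let p be a prime and t > e > 1 integers, q = p^e, and h = ⌊t/e⌋. Define l_k = 2h − k + 2 if e divides t, and l_k = 2h − k + t + e − he otherwise. Then for every integer k with 2 ≤ k ≤ h and every integer r with l_k ≤ r ≤ 1 + t − (e−1)(k−1), there exists a normalized generalized Hadamard matrix H over F_q of order p^t such that C_H is an F_p-additive code of length p^t with ker(C_H) = k and rank(C_H) = r. -/

import Mathlib

/-!
Write `K = ZMod p`, `L = GaloisField p e`. If `V`, `W` are groups of order `p ^ t` and
`B : V × W → L` is biadditive with `B v` surjective for every `v ≠ 0`, then the table of `B` is a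
normalized generalized Hadamard matrix with additive code. All pairings used here have the form
`B v w = ∑ i, c v i * g w i` with `c : V → L ^ ι` and `g : W → L ^ ι` additive and each having
image that spans `L ^ ι`; the code is then a copy of `L × c(V)` inside `L × L ^ ι`, so its rank is
`1 + |ι|` and its kernel has dimension `1 +` that of the largest `L`-subspace contained in `c(V)`
(`code_of_pairing`).

The pairing (`construction`) lives on `V = W = L ^ (m + κ) × K ^ τ` and is
`∑ v_j w_j + ∑ v_j ^ (p ^ s) w_{j+1} ^ (p ^ s) + ∑ T_{ij} u_i z_j`, where for each `j < m` the
exponent `s` runs over `1, …, n_j` with `1 ≤ n_j ≤ e - 1`. The first nonzero `v_j` makes it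
surjective, since the Frobenius terms only reach the next coordinate. Frobenius powers are linearly
independent (`frob_indep`), so `|ι| = m + κ + ∑ n_j + τ`. The largest `L`-subspace of `c(V)` is
`L ^ κ`: a twisted coordinate `j < m` is not closed under scalars, nor is a coordinate in `K`.

If `e ∣ t`, take `τ = 0` and `m + κ = t / e`. Otherwise take `m + κ = t / e - 1` and
`e < τ < 2e`; here one needs an invertible `T` over `L` such that the entries of `vᵀ T` span `L`
over `K` for each nonzero `v` in `K ^ τ`. Let `θ` generate the field `E` of degree `τ` and `ω`
generate `L`, with minimal polynomial `μ` over `K`. Then `T` (up to transposition) is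
`G = μ / (X - ω)` evaluated at the matrix of multiplication by `θ` (`block_exists`): it divides
`μ(θ) ≠ 0`, hence is invertible, and the coefficients of `G` span `L` over `K`.
-/

open scoped BigOperators

section Defs

variable {ι : Type*} {F : Type*} [Field F]

/-- `H` is a generalised Hadamard matrix with parameter `lam`: for any two distinct rows,
every difference value is attained exactly `lam` times. -/
def IsGH (lam : ℕ) (H : Matrix ι ι F) : Prop :=
  ∀ i j : ι, i ≠ j → ∀ a : F, Nat.card {s : ι // H i s - H j s = a} = lam

/-- The generalised Hadamard code `C_H` associated to a matrix `H`: the union of all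
translates of the rows of `H` by constant vectors. -/
def ghCode (H : Matrix ι ι F) : Set (ι → F) :=
  {v | ∃ (i : ι) (α : F), v = fun s => H i s + α}

/-- The kernel `K(C)` of a code `C`. -/
def kerSet (C : Set (ι → F)) : Set (ι → F) :=
  {x | ∀ α : F, (fun c => α • x + c) '' C = C}

/-- The `p`-kernel `K_p(C)` of a code `C`. -/
def pkerSet (C : Set (ι → F)) : Set (ι → F) :=
  {x | (fun c => x + c) '' C = C}

end Defs

/-- A matrix is normalized if its first row and first column are identically zero. -/
def IsNormalized {n : ℕ} {F : Type*} [Zero F] (H : Matrix (Fin n) (Fin n) F) : Prop :=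
  ∀ i j : Fin n, (i.val = 0 ∨ j.val = 0) → H i j = 0

/-- A code over `GF(p^e)` is `F_p`-additive if it is an `F_p`-linear subspace. -/
def IsFpAdditive (p : ℕ) [Fact p.Prime] {e : ℕ} {ι : Type*}
    (C : Set (ι → GaloisField p e)) : Prop :=
  ∃ S : Submodule (ZMod p) (ι → GaloisField p e), C = ↑S

/-- The rank of a code: the dimension over `F` of its `F`-linear span. -/
noncomputable def rankC (F : Type*) [Field F] {ι : Type*} (C : Set (ι → F)) : ℕ :=
  Module.finrank F (Submodule.span F C)

/-- The dimension over `F` of the kernel of a code. -/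
noncomputable def kerDim (F : Type*) [Field F] {ι : Type*} (C : Set (ι → F)) : ℕ :=
  Module.finrank F (Submodule.span F (kerSet C))

/-! ### A full-rank block from a larger field -/

open Polynomial in
/-- If `L` and `E` are simple extensions of `K` with `[L : K] < [E : K] = τ`, there is an invertible
`τ × τ` matrix `T` over `L` such that `w ↦ vᵀ T w` maps `K ^ τ` onto `L` for each nonzero `v` in
`K ^ τ`. -/
theorem block_exists {K L E : Type*} [Field K] [Field L] [Field E] [Algebra K L] [Algebra K E]
    (pL : PowerBasis K L) (pE : PowerBasis K E) (hlt : pL.dim < pE.dim) :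
    ∃ T : Matrix (Fin pE.dim) (Fin pE.dim) L,
      (∀ v : Fin pE.dim → K, v ≠ 0 → ∀ y : L, ∃ w : Fin pE.dim → K,
        ∑ i, algebraMap K L (v i) * ∑ j, T i j * algebraMap K L (w j) = y) ∧
      (∀ x : Fin pE.dim → L, (∀ j, ∑ i, x i * T i j = 0) → x = 0) := by
  classical
  have hint : IsIntegral K pL.gen := pL.isIntegral_gen
  set G : L[X] := minpolyDiv K pL.gen with hG
  set M : Matrix (Fin pE.dim) (Fin pE.dim) K := Algebra.leftMulMatrix pE.basis pE.gen with hM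
  set φ : Matrix (Fin pE.dim) (Fin pE.dim) K →ₐ[K] Matrix (Fin pE.dim) (Fin pE.dim) L :=
    (Algebra.ofId K L).mapMatrix with hφ
  have hGdeg : G.natDegree < pL.dim := by
    rw [← pL.natDegree_minpoly]; exact natDegree_minpolyDiv_lt hint
  have hunit : IsUnit (aeval (φ M) G) := by
    have h1 : aeval (φ M) G * (φ M - algebraMap L _ pL.gen) =
        φ (Algebra.leftMulMatrix pE.basis (aeval pE.gen (minpoly K pL.gen))) := by
      have := congrArg (aeval (φ M)) (minpolyDiv_spec K pL.gen)
      rw [map_mul, map_sub, aeval_X, aeval_C, aeval_map_algebraMap] at this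
      rw [this, ← aeval_algHom_apply, ← aeval_algHom_apply]
    have hne : aeval pE.gen (minpoly K pL.gen) ≠ 0 := by
      intro h
      have := natDegree_le_of_dvd (minpoly.dvd K pE.gen h) (minpoly.ne_zero hint)
      rw [pE.natDegree_minpoly, pL.natDegree_minpoly] at this
      omega
    have h2 : IsUnit (aeval (φ M) G * (φ M - algebraMap L _ pL.gen)) := by
      rw [h1]
      exact ((hne.isUnit).map (Algebra.leftMulMatrix pE.basis)).map φ
    rw [Matrix.isUnit_iff_isUnit_det, Matrix.det_mul] at h2
    rw [Matrix.isUnit_iff_isUnit_det]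
    exact isUnit_of_mul_isUnit_left h2
  refine ⟨(aeval (φ M) G).transpose, ?_, ?_⟩
  · intro v hv
    set x : E := pE.basis.equivFun.symm v with hx
    have hx0 : x ≠ 0 := by
      rw [hx]; exact (LinearEquiv.map_ne_zero_iff _).2 hv
    let A : (Fin pE.dim → K) →ₗ[K] L :=
      ∑ i, v i • ∑ j, (aeval (φ M) G j i) • ((Algebra.linearMap K L) ∘ₗ LinearMap.proj j)
    have hA : ∀ w, A w = ∑ i, algebraMap K L (v i) *
        ∑ j, (aeval (φ M) G).transpose i j * algebraMap K L (w j) := by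
      intro w
      simp [A, Algebra.smul_def]
    -- `A` applied to the coordinate vector of a functional `ψ` on `E`
    have hA2 : ∀ ψ : E →ₗ[K] K, A (fun j => ψ (pE.basis j)) =
        ∑ l ∈ Finset.range pL.dim, algebraMap K L (ψ (pE.gen ^ l * x)) * G.coeff l := by
      intro ψ
      have hent : ∀ j i, aeval (φ M) G j i = ∑ l ∈ Finset.range pL.dim,
          G.coeff l * algebraMap K L (pE.basis.repr (pE.gen ^ l * pE.basis i) j) := by
        intro j i
        rw [aeval_eq_sum_range' hGdeg, Matrix.sum_apply]
        refine Finset.sum_congr rfl fun l _ => ?_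
        rw [← map_pow, hM, ← map_pow, Matrix.smul_apply, smul_eq_mul,
          ← Algebra.leftMulMatrix_eq_repr_mul]
        rfl
      have hψ : ∀ l, ψ (pE.gen ^ l * x) = ∑ i, v i * ∑ j,
          pE.basis.repr (pE.gen ^ l * pE.basis i) j * ψ (pE.basis j) := by
        intro l
        have : x = ∑ i, v i • pE.basis i := by
          rw [hx, Module.Basis.equivFun_symm_apply]
        rw [this, Finset.mul_sum, map_sum]
        refine Finset.sum_congr rfl fun i _ => ?_
        rw [mul_smul_comm, map_smul, smul_eq_mul]
        congr 1
        conv_lhs => rw [← pE.basis.sum_repr (pE.gen ^ l * pE.basis i)]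
        simp
      rw [hA]
      simp only [Matrix.transpose_apply, hent, hψ, map_sum, map_mul, Finset.mul_sum, Finset.sum_mul]
      rw [Finset.sum_comm (s := Finset.range pL.dim)]
      refine Finset.sum_congr rfl fun i _ => ?_
      rw [Finset.sum_comm (s := Finset.range pL.dim)]
      refine Finset.sum_congr rfl fun j _ => ?_
      refine Finset.sum_congr rfl fun l _ => ?_
      ring
    -- The functional `z ↦ coord_l (x⁻¹ z)` isolates the `l`-th coefficient of `G`, and these
    -- coefficients span `L`.
    have htop : LinearMap.range A = ⊤ := by
      have hadj : Submodule.span K (Set.range G.coeff) = ⊤ := by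
        rw [hG, span_coeff_minpolyDiv hint, pL.adjoin_gen_eq_top]; rfl
      rw [eq_top_iff, ← hadj, Submodule.span_le]
      rintro _ ⟨l, rfl⟩
      by_cases hl : l < pL.dim
      · refine ⟨fun j => ((pE.basis.coord ⟨l, hl.trans hlt⟩) ∘ₗ
          LinearMap.mulLeft K x⁻¹) (pE.basis j), ?_⟩
        rw [hA2, Finset.sum_eq_single l]
        · have : x⁻¹ * (pE.gen ^ l * x) = pE.basis ⟨l, hl.trans hlt⟩ := by
            rw [pE.basis_eq_pow]; field_simp
          simp [this, -PowerBasis.coe_basis]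
        · intro l' hl' hne
          have hl'' := Finset.mem_range.1 hl'
          have : x⁻¹ * (pE.gen ^ l' * x) = pE.basis ⟨l', hl''.trans hlt⟩ := by
            rw [pE.basis_eq_pow]; field_simp
          simp [this, hne, -PowerBasis.coe_basis]
        · simp [hl]
      · rw [coeff_eq_zero_of_natDegree_lt (by omega)]
        exact zero_mem _
    intro y
    obtain ⟨w, hw⟩ := LinearMap.range_eq_top.1 htop y
    exact ⟨w, by rw [← hA, hw]⟩
  · intro x hx
    have hd : (aeval (φ M) G).det ≠ 0 :=
      ((Matrix.isUnit_iff_isUnit_det _).1 hunit).ne_zero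
    refine Matrix.eq_zero_of_mulVec_eq_zero hd ?_
    ext j
    rw [Pi.zero_apply, ← hx j, Matrix.mulVec, dotProduct]
    exact Finset.sum_congr rfl fun i _ => by rw [Matrix.transpose_apply, mul_comm]

/-! ### Linear independence of Frobenius powers -/

open Polynomial in
/-- Distinct Frobenius powers below the field degree are linearly independent functions:
a relation is a polynomial of degree less than `|L|` vanishing on `L`. -/
theorem frob_indep {L : Type*} [Field L] {p e : ℕ} [hp : Fact p.Prime]
    (hcard : Nat.card L = p ^ e) {n : ℕ} (hn : n < e) (x₀ : L) (f : Fin n → L)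
    (h : ∀ y : L, x₀ * y + ∑ i, f i * y ^ p ^ (i.val + 1) = 0) : x₀ = 0 ∧ ∀ i, f i = 0 := by
  have hp1 := hp.out.one_lt
  have hfin : Finite L := Nat.finite_of_card_ne_zero (by rw [hcard]; positivity)
  have := Fintype.ofFinite L
  set P : L[X] := C x₀ * X + ∑ i, C (f i) * X ^ p ^ (i.val + 1) with hP
  have hdeg : P.natDegree ≤ p ^ n := by
    refine natDegree_add_le_of_degree_le ?_ (natDegree_sum_le_of_forall_le _ _ fun i _ => ?_)
    · exact (natDegree_C_mul_le _ _).trans (natDegree_X_le.trans (Nat.one_le_pow _ _ (by omega)))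
    · refine (natDegree_C_mul_X_pow_le _ _).trans (Nat.pow_le_pow_right (by omega) (by omega))
  have hP0 : P = 0 := by
    refine eq_zero_of_natDegree_lt_card_of_eval_eq_zero P (f := id) Function.injective_id ?_ ?_
    · intro y
      simpa [hP, eval_finsetSum] using h y
    · rw [← Nat.card_eq_fintype_card, hcard]
      exact hdeg.trans_lt (Nat.pow_lt_pow_right hp1 hn)
  have hinj : ∀ a b : ℕ, p ^ a = p ^ b ↔ a = b := fun a b => Nat.pow_right_inj hp1
  constructor
  · have := congrArg (fun Q => coeff Q 1) hP0
    simp only [hP, coeff_add, finsetSum_coeff, coeff_C_mul, coeff_X_pow, coeff_X_one,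
      coeff_zero] at this
    rw [Finset.sum_eq_zero] at this
    · simpa using this
    · intro i _
      have : (1 : ℕ) ≠ p ^ (i.val + 1) := by
        have := (hinj 0 (i.val + 1)).not.2 (by omega)
        simpa using this
      simp [this]
  · intro i
    have := congrArg (fun Q => coeff Q (p ^ (i.val + 1))) hP0
    have h1 : (1 : ℕ) ≠ p ^ (i.val + 1) := by
      have := (hinj 0 (i.val + 1)).not.2 (by omega)
      simpa using this
    simp only [hP, coeff_add, finsetSum_coeff, coeff_C_mul, coeff_X_pow, coeff_X, h1, if_false,
      coeff_zero, hinj] at this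
    rw [Finset.sum_eq_single i] at this
    · simpa using this
    · intro j _ hj
      rw [if_neg fun h => hj (Fin.ext (by omega)), mul_zero]
    · simp

/-- Every `N` with `m ≤ N ≤ m (e - 1)` is a sum of `m` integers in `[1, e - 1]`. -/
theorem exists_counts (e m N : ℕ) (h₁ : m ≤ N) (h₂ : N ≤ m * (e - 1)) :
    ∃ n : Fin m → ℕ, (∀ j, 1 ≤ n j ∧ n j ≤ e - 1) ∧ ∑ j, n j = N := by
  induction m generalizing N with
  | zero => exact ⟨fun _ => 0, fun j => j.elim0, by simp at h₂ ⊢; omega⟩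
  | succ m ih =>
    have h2' : N ≤ m * (e - 1) + (e - 1) := by rw [← Nat.succ_mul]; exact h₂
    have h3 : 1 ≤ e - 1 := by
      by_contra h
      have : e - 1 = 0 := by omega
      rw [this] at h₂; omega
    have h4 : m * 1 ≤ m * (e - 1) := Nat.mul_le_mul_left _ h3
    obtain ⟨n, hn, hs⟩ := ih (N - min (e - 1) (N - m)) (by omega) (by omega)
    refine ⟨Fin.cons (min (e - 1) (N - m)) n, ?_, ?_⟩
    · intro j
      refine Fin.cases ?_ (fun j => ?_) j
      · simp only [Fin.cons_zero]; omega
      · simpa using hn j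
    · rw [Fin.sum_univ_succ]
      simp only [Fin.cons_zero, Fin.cons_succ, hs]; omega

/-! ### Codes from pairings -/

/-- A bijection from `Fin n` sending the index `0` to the zero element. -/
theorem exists_equiv_zero {n : ℕ} {V : Type*} [AddCommGroup V] (hn : 0 < n)
    (hV : Nat.card V = n) : ∃ f : Fin n ≃ V, ∀ i, i.val = 0 → f i = 0 := by
  classical
  have hfin : Finite V := Nat.finite_of_card_ne_zero (by omega)
  have f₀ : Fin n ≃ V := (Finite.equivFinOfCardEq hV).symm
  refine ⟨f₀.trans (Equiv.swap (f₀ ⟨0, hn⟩) 0), fun i hi => ?_⟩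
  have : i = ⟨0, hn⟩ := Fin.ext hi
  simp [this]

theorem card_fiber_of_surjective {W L : Type*} [AddCommGroup W] [AddCommGroup L] [Finite W]
    {p t e : ℕ} (hp : 0 < p) (het : e ≤ t) (hW : Nat.card W = p ^ t) (hL : Nat.card L = p ^ e)
    (f : W →+ L) (hf : Function.Surjective f) (a : L) :
    Nat.card {w : W // f w = a} = p ^ (t - e) := by
  have h1 : Nat.card {w : W // f w = a} = Nat.card f.ker := by
    obtain ⟨w₀, rfl⟩ := hf a
    refine Nat.card_congr ⟨fun w => ⟨w.1 - w₀, ?_⟩, fun w => ⟨w.1 + w₀, ?_⟩, ?_, ?_⟩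
    · rw [AddMonoidHom.mem_ker, map_sub, w.2, sub_self]
    · rw [map_add, AddMonoidHom.mem_ker.1 w.2, zero_add]
    · intro w; simp
    · intro w; simp
  have h2 := AddSubgroup.card_eq_card_quotient_mul_card_addSubgroup f.ker
  rw [Nat.card_congr (QuotientAddGroup.quotientKerEquivOfSurjective f hf).toEquiv, hW, hL] at h2
  rw [h1]
  have h3 : p ^ t = p ^ e * p ^ (t - e) := by rw [← pow_add]; congr 1; omega
  exact (Nat.eq_of_mul_eq_mul_left (by positivity) (h3.symm.trans h2)).symm

/-- The generalized Hadamard matrix of the pairing `(v, w) ↦ ∑ i, c v i * g w i`. The hypotheses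
`hc`, `hg` say that the images of `c` and `g` span `ι → L`, and `hker` that the range of `φ` is the
largest `L`-subspace contained in the image of `c`. -/
theorem code_of_pairing {p e t κ : ℕ} [Fact p.Prime] (het : e ≤ t)
    {L V W ι : Type*} [Field L] [Algebra (ZMod p) L] [AddCommGroup V] [AddCommGroup W] [Fintype ι]
    (hL : Nat.card L = p ^ e) (hV : Nat.card V = p ^ t) (hW : Nat.card W = p ^ t)
    (c : V →+ (ι → L)) (g : W →+ (ι → L))
    (hc : ∀ x : ι → L, (∀ v, ∑ i, x i * c v i = 0) → x = 0)
    (hg : ∀ x : ι → L, (∀ w, ∑ i, x i * g w i = 0) → x = 0)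
    (hsurj : ∀ v, v ≠ 0 → ∀ y, ∃ w, ∑ i, c v i * g w i = y)
    (φ : (Fin κ → L) →ₗ[L] (ι → L)) (hφ : Function.Injective φ)
    (hker : ∀ x, x ∈ LinearMap.range φ ↔ ∀ α : L, ∃ v, α • x = c v) :
    ∃ H : Matrix (Fin (p ^ t)) (Fin (p ^ t)) L,
      IsGH (p ^ (t - e)) H ∧ IsNormalized H ∧
      (∃ S : Submodule (ZMod p) (Fin (p ^ t) → L), ghCode H = ↑S) ∧
      kerDim L (ghCode H) = κ + 1 ∧ rankC L (ghCode H) = Fintype.card ι + 1 := by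
  classical
  have hp : 0 < p := (Fact.out : p.Prime).pos
  have hpt : 0 < p ^ t := by positivity
  have hWfin : Finite W := Nat.finite_of_card_ne_zero (by omega)
  obtain ⟨fV, hfV⟩ := exists_equiv_zero hpt hV
  obtain ⟨fW, hfW⟩ := exists_equiv_zero hpt hW
  -- `Ψ (α, x)` is the word `s ↦ ⟨x, g s⟩ + α`; the code is the image of `L × c(V)`.
  let Ψ : (L × (ι → L)) →ₗ[L] (Fin (p ^ t) → L) :=
    { toFun := fun y s => ∑ i, y.2 i * g (fW s) i + y.1
      map_add' := fun y z => by
        ext s; simp [add_mul, Finset.sum_add_distrib]; ring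
      map_smul' := fun a y => by
        ext s; simp [mul_add, Finset.mul_sum, mul_assoc] }
  have hΨ : ∀ y s, Ψ y s = ∑ i, y.2 i * g (fW s) i + y.1 := fun _ _ => rfl
  have hΨinj : Function.Injective Ψ := by
    rw [← LinearMap.ker_eq_bot, LinearMap.ker_eq_bot']
    rintro ⟨α, x⟩ h
    have h0 : ∀ w, ∑ i, x i * g w i + α = 0 := fun w => by
      have := congrFun h (fW.symm w)
      rw [hΨ] at this
      simpa using this
    have hα : α = 0 := by simpa using h0 0
    subst hα
    rw [hg x fun w => by simpa using h0 w]
    rfl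
  let H : Matrix (Fin (p ^ t)) (Fin (p ^ t)) L := fun i s => ∑ j, c (fV i) j * g (fW s) j
  have hcode : ∀ u, u ∈ ghCode H ↔ ∃ (α : L) (v : V), u = Ψ (α, c v) := by
    intro u
    constructor
    · rintro ⟨i, α, rfl⟩
      exact ⟨α, fV i, rfl⟩
    · rintro ⟨α, v, rfl⟩
      refine ⟨fV.symm v, α, ?_⟩
      ext s
      simp [H, hΨ]
  have hadd : ∀ u u', u ∈ ghCode H → u' ∈ ghCode H → u + u' ∈ ghCode H := by
    intro u u' hu hu'
    rw [hcode] at *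
    obtain ⟨α, v, rfl⟩ := hu
    obtain ⟨α', v', rfl⟩ := hu'
    exact ⟨α + α', v + v', by rw [← map_add, map_add c, Prod.mk_add_mk]⟩
  have hneg : ∀ u, u ∈ ghCode H → -u ∈ ghCode H := by
    intro u hu
    rw [hcode] at *
    obtain ⟨α, v, rfl⟩ := hu
    exact ⟨-α, -v, by rw [← map_neg, map_neg c, Prod.neg_mk]⟩
  have hzero : (0 : Fin (p ^ t) → L) ∈ ghCode H :=
    (hcode _).2 ⟨0, 0, by rw [map_zero c, Prod.mk_zero_zero, map_zero]⟩
  have hkerSet : ∀ x, x ∈ kerSet (ghCode H) ↔ ∀ α : L, α • x ∈ ghCode H := by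
    intro x
    constructor
    · intro hx α
      rw [← hx α]
      exact ⟨0, hzero, by simp⟩
    · intro hx α
      ext u
      constructor
      · rintro ⟨c, hc, rfl⟩
        exact hadd _ _ (hx α) hc
      · intro hu
        exact ⟨-(α • x) + u, hadd _ _ (hneg _ (hx α)) hu, by simp⟩
  refine ⟨H, ?_, ?_, ?_, ?_, ?_⟩
  · intro i j hij a
    have hne : fV i - fV j ≠ 0 := sub_ne_zero.2 fun h => hij (fV.injective h)
    let f : W →+ L :=
      { toFun := fun w => ∑ l, c (fV i - fV j) l * g w l
        map_zero' := by simp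
        map_add' := fun w w' => by simp [mul_add, Finset.sum_add_distrib] }
    rw [← card_fiber_of_surjective hp het hW hL f (hsurj _ hne) a]
    refine Nat.card_congr (fW.subtypeEquiv fun s => ?_)
    have : f (fW s) = H i s - H j s := by
      simp [f, H, sub_mul, Finset.sum_sub_distrib]
    rw [this]
  · rintro i j (h | h)
    · simp [H, hfV i h]
    · simp [H, hfW j h]
  · refine ⟨AddSubgroup.toZModSubmodule p
      { carrier := ghCode H
        add_mem' := fun {a b} ha hb => hadd a b ha hb
        zero_mem' := hzero
        neg_mem' := fun {a} ha => hneg a ha }, ?_⟩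
    rfl
  · let Θ : (L × (Fin κ → L)) →ₗ[L] (Fin (p ^ t) → L) := Ψ ∘ₗ (LinearMap.id.prodMap φ)
    have hΘ : Function.Injective Θ := hΨinj.comp (Function.injective_id.prodMap hφ)
    have : kerSet (ghCode H) = (LinearMap.range Θ : Set (Fin (p ^ t) → L)) := by
      ext x
      rw [hkerSet]
      constructor
      · intro hx
        obtain ⟨α, v, hv⟩ := (hcode x).1 (by simpa using hx 1)
        have hm : c v ∈ LinearMap.range φ := by
          rw [hker]
          intro β
          obtain ⟨α', v', hv'⟩ := (hcode _).1 (hx β)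
          rw [hv, ← map_smul] at hv'
          exact ⟨v', congrArg Prod.snd (hΨinj hv')⟩
        obtain ⟨y, hy⟩ := hm
        exact ⟨(α, y), by rw [hv, ← hy]; rfl⟩
      · rintro ⟨⟨α, y⟩, rfl⟩ β
        obtain ⟨v, hv⟩ := (hker (φ y)).1 ⟨y, rfl⟩ β
        refine (hcode _).2 ⟨β * α, v, ?_⟩
        rw [← hv, ← map_smul]
        simp [Θ]
    rw [kerDim, this, Submodule.span_eq, LinearMap.finrank_range_of_inj hΘ,
      Module.finrank_prod, Module.finrank_self, Module.finrank_fin_fun, add_comm]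
  · have hspan : Submodule.span L (ghCode H) = LinearMap.range Ψ := by
      apply le_antisymm
      · rw [Submodule.span_le]
        intro u hu
        obtain ⟨α, v, rfl⟩ := (hcode u).1 hu
        exact ⟨_, rfl⟩
      · have hc' : Submodule.span L (Set.range c) = ⊤ := by
          by_contra hne
          obtain ⟨f, hf0, hf⟩ := Submodule.exists_le_ker_of_lt_top _ (lt_top_iff_ne_top.2 hne)
          apply hf0
          have hfx : ∀ x, f x = ∑ i, f (Pi.single i 1) * x i := fun x => by
            rw [LinearMap.pi_apply_eq_sum_univ f x]
            exact Finset.sum_congr rfl fun i _ => by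
              rw [smul_eq_mul, mul_comm]
              congr 2
              ext j
              simp [Pi.single_apply, eq_comm]
          have hz := hc (fun i => f (Pi.single i 1)) fun v => by
            rw [← hfx]
            exact hf (Submodule.subset_span ⟨v, rfl⟩)
          ext1
          ext
          simpa using congrFun hz _
        have h1 : ∀ x : ι → L, Ψ (0, x) ∈ Submodule.span L (ghCode H) := by
          intro x
          have hx : x ∈ Submodule.span L (Set.range c) := hc' ▸ Submodule.mem_top
          have h2 : Submodule.span L (Set.range c) ≤
              (Submodule.span L (ghCode H)).comap (Ψ ∘ₗ LinearMap.inr L L (ι → L)) := by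
            rw [Submodule.span_le]
            rintro _ ⟨v, rfl⟩
            exact Submodule.subset_span ((hcode _).2 ⟨0, v, rfl⟩)
          exact h2 hx
        rintro _ ⟨⟨α, x⟩, rfl⟩
        have h3 : Ψ (α, 0) ∈ Submodule.span L (ghCode H) :=
          Submodule.subset_span ((hcode _).2 ⟨α, 0, by rw [map_zero]⟩)
        have : ((α, x) : L × (ι → L)) = (α, 0) + (0, x) := by simp
        rw [this, map_add]
        exact add_mem h3 (h1 x)
    rw [rankC, hspan, LinearMap.finrank_range_of_inj hΨinj,
      Module.finrank_prod, Module.finrank_self, Module.finrank_fintype_fun_eq_card, add_comm]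

/-! ### The pairing with prescribed rank and kernel -/

/-- Independence of the coordinate functions together with some of their Frobenius powers. -/
theorem frob_indep_pi {L : Type*} [Field L] {p e a m : ℕ} [hp : Fact p.Prime]
    (hcard : Nat.card L = p ^ e) {n : Fin m → ℕ} (hn : ∀ j, n j < e)
    (q : Fin m → Fin a) (hq : Function.Injective q)
    (x₁ : Fin a → L) (x₂ : (Σ j : Fin m, Fin (n j)) → L)
    (h : ∀ w : Fin a → L,
      ∑ j, x₁ j * w j + ∑ s, x₂ s * w (q s.1) ^ p ^ (s.2.val + 1) = 0) :
    (∀ j, x₁ j = 0) ∧ ∀ s, x₂ s = 0 := by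
  classical
  have hp0 : ∀ i : ℕ, p ^ (i + 1) ≠ 0 := fun i => pow_ne_zero _ hp.out.ne_zero
  have hx₂ : ∀ s, x₂ s = 0 := by
    rintro ⟨j, i⟩
    refine (frob_indep hcard (hn j) (x₁ (q j)) (fun i => x₂ ⟨j, i⟩) fun y => ?_).2 i
    have := h (Pi.single (q j) y)
    rw [Fintype.sum_sigma, Finset.sum_eq_single (q j), Finset.sum_eq_single j] at this
    · simpa using this
    · intro j' _ hj'
      refine Finset.sum_eq_zero fun i _ => ?_
      rw [Pi.single_eq_of_ne (hq.ne hj'), zero_pow (hp0 _), mul_zero]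
    · simp
    · intro j' _ hj'
      rw [Pi.single_eq_of_ne hj', mul_zero]
    · simp
  refine ⟨fun j => ?_, hx₂⟩
  have := h (Pi.single j 1)
  simpa [hx₂, Pi.single_apply] using this

theorem exists_pow_ne {L : Type*} [Field L] {p e i : ℕ} [hp : Fact p.Prime]
    (hcard : Nat.card L = p ^ e) (hi : i + 1 < e) : ∃ y : L, y ^ p ^ (i + 1) ≠ y := by
  by_contra! h
  have h1 := frob_indep (p := p) hcard hi (-1 : L) (fun j => if j = Fin.last i then 1 else 0)
    fun y => by simp [h y]
  exact neg_ne_zero.2 one_ne_zero h1.1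

/-- The pairing `∑ v_j w_j + ∑ v_j ^ (p ^ s) w_{j+1} ^ (p ^ s) + ∑ T_{ij} u_i z_j` on
`L ^ (m + κ) × K ^ τ`, with `1 ≤ s ≤ n_j` and `j < m`. The hypothesis `1 ≤ κ` ensures that the
index `j + 1` exists for each `j < m`. -/
theorem construction {p e t m κ τ : ℕ} [hp : Fact p.Prime] {L : Type*} [Field L]
    [Algebra (ZMod p) L] (hL : Nat.card L = p ^ e) (he : 1 < e) (hκ : 1 ≤ κ)
    (n : Fin m → ℕ) (hn : ∀ j, 1 ≤ n j ∧ n j ≤ e - 1)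
    (T : Matrix (Fin τ) (Fin τ) L)
    (hT₁ : ∀ v : Fin τ → ZMod p, v ≠ 0 → ∀ y : L, ∃ w : Fin τ → ZMod p,
        ∑ i, algebraMap (ZMod p) L (v i) * ∑ j, T i j * algebraMap (ZMod p) L (w j) = y)
    (hT₂ : ∀ x : Fin τ → L, (∀ j, ∑ i, x i * T i j = 0) → x = 0)
    (ht : e * (m + κ) + τ = t) :
    ∃ H : Matrix (Fin (p ^ t)) (Fin (p ^ t)) L,
      IsGH (p ^ (t - e)) H ∧ IsNormalized H ∧
      (∃ S : Submodule (ZMod p) (Fin (p ^ t) → L), ghCode H = ↑S) ∧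
      kerDim L (ghCode H) = κ + 1 ∧
      rankC L (ghCode H) = (m + κ + ∑ j, n j + τ) + 1 := by
  classical
  have hp0 : ∀ i : ℕ, p ^ (i + 1) ≠ 0 := fun i => pow_ne_zero _ hp.out.ne_zero
  have hz0 : ∀ i : ℕ, (0 : L) ^ p ^ (i + 1) = 0 := fun i => zero_pow (hp0 i)
  have hchar : CharP L p := charP_of_injective_algebraMap (algebraMap (ZMod p) L).injective p
  have hfin : Finite L := Nat.finite_of_card_ne_zero (by
    rw [hL]; exact pow_ne_zero _ hp.out.ne_zero)
  have hcardV : Nat.card ((Fin (m + κ) → L) × (Fin τ → ZMod p)) = p ^ t := by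
    rw [Nat.card_prod, Nat.card_fun, Nat.card_fun, hL, Nat.card_zmod, Nat.card_fin, Nat.card_fin,
      ← pow_mul, ← pow_add, ht]
  have hnlt : ∀ j, n j < e := fun j => by have := hn j; omega
  let q₀ : Fin m → Fin (m + κ) := fun j => ⟨j.val, by omega⟩
  let q₁ : Fin m → Fin (m + κ) := fun j => ⟨j.val + 1, by omega⟩
  have hq₀ : Function.Injective q₀ := fun j j' h => Fin.ext (by simpa [q₀] using h)
  have hq₁ : Function.Injective q₁ := fun j j' h => Fin.ext (by simpa [q₁] using h)
  let ι := Fin (m + κ) ⊕ ((Σ j : Fin m, Fin (n j)) ⊕ Fin τ)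
  let c : ((Fin (m + κ) → L) × (Fin τ → ZMod p)) →+ (ι → L) :=
    { toFun := fun v => Sum.elim v.1 (Sum.elim (fun s => v.1 (q₀ s.1) ^ p ^ (s.2.val + 1))
        (fun i => algebraMap (ZMod p) L (v.2 i)))
      map_zero' := by
        ext (j | s | i)
        · rfl
        · simp [hp.out.ne_zero]
        · simp
      map_add' := fun v w => by
        ext (j | s | i)
        · rfl
        · simp [add_pow_char_pow]
        · simp }
  let g : ((Fin (m + κ) → L) × (Fin τ → ZMod p)) →+ (ι → L) :=
    { toFun := fun w => Sum.elim w.1 (Sum.elim (fun s => w.1 (q₁ s.1) ^ p ^ (s.2.val + 1))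
        (fun i => ∑ j, T i j * algebraMap (ZMod p) L (w.2 j)))
      map_zero' := by
        ext (j | s | i)
        · rfl
        · simp [hp.out.ne_zero]
        · simp
      map_add' := fun v w => by
        ext (j | s | i)
        · rfl
        · simp [add_pow_char_pow]
        · simp [mul_add, Finset.sum_add_distrib] }
  -- the inclusion of the last `κ` untwisted coordinates
  let φ : (Fin κ → L) →ₗ[L] (ι → L) :=
    { toFun := fun y => Sum.elim (Fin.addCases (fun _ => 0) y) (fun _ => 0)
      map_add' := fun y z => by
        ext (j | s)
        · refine Fin.addCases (fun j => ?_) (fun j => ?_) j <;> simp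
        · simp
      map_smul' := fun a y => by
        ext (j | s)
        · refine Fin.addCases (fun j => ?_) (fun j => ?_) j <;> simp
        · simp }
  have hcard : Fintype.card ι = m + κ + ∑ j, n j + τ := by
    simp [ι]; ring
  rw [← hcard]
  have het : e ≤ t := by
    have : e * 1 ≤ e * (m + κ) := Nat.mul_le_mul_left _ (by omega)
    omega
  refine code_of_pairing het hL hcardV hcardV c g ?_ ?_ ?_ φ ?_ ?_
  · intro x hx
    have h1 := frob_indep_pi hL hnlt q₀ hq₀ (fun j => x (.inl j)) (fun s => x (.inr (.inl s)))
      fun w => by simpa [c, ι, Fintype.sum_sum_type] using hx (w, 0)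
    ext (j | s | i)
    · exact h1.1 j
    · exact h1.2 s
    · have := hx (0, Pi.single i 1)
      simpa [c, ι, Fintype.sum_sum_type, hz0, Pi.single_apply, apply_ite (algebraMap (ZMod p) L)]
        using this
  · intro x hx
    have h1 := frob_indep_pi hL hnlt q₁ hq₁ (fun j => x (.inl j)) (fun s => x (.inr (.inl s)))
      fun w => by simpa [g, ι, Fintype.sum_sum_type] using hx (w, 0)
    have h2 := hT₂ (fun i => x (.inr (.inr i))) fun j => by
      have := hx (0, Pi.single j 1)
      simpa [g, ι, Fintype.sum_sum_type, hz0, Pi.single_apply,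
        apply_ite (algebraMap (ZMod p) L)] using this
    ext (j | s | i)
    · exact h1.1 j
    · exact h1.2 s
    · exact congrFun h2 i
  · rintro ⟨v, u⟩ hvu y
    by_cases hv : v = 0
    · have hu : u ≠ 0 := fun hu => hvu (by rw [hv, hu]; rfl)
      obtain ⟨z, hz⟩ := hT₁ u hu y
      refine ⟨(0, z), ?_⟩
      rw [← hz]
      simp [c, g, ι, Fintype.sum_sum_type, hz0, hv]
    -- Only the first nonzero coordinate of `v` is used: the Frobenius terms reaching it come from
    -- earlier coordinates, which vanish.
    · obtain ⟨j, hj, hmin⟩ : ∃ j, v j ≠ 0 ∧ ∀ j' < j, v j' = 0 := by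
        obtain ⟨j₀, hj₀⟩ := Function.ne_iff.1 hv
        obtain ⟨j, hj, hmin⟩ := WellFounded.has_min (wellFounded_lt (α := Fin (m + κ)))
          {j | v j ≠ 0} ⟨j₀, hj₀⟩
        exact ⟨j, hj, fun j' hj' => by
          by_contra h
          exact hmin j' h hj'⟩
      refine ⟨(Pi.single j (y / v j), 0), ?_⟩
      have hs : ∀ s : (Σ j : Fin m, Fin (n j)), v (q₀ s.1) ^ p ^ (s.2.val + 1) *
          (Pi.single j (y / v j) : Fin (m + κ) → L) (q₁ s.1) ^ p ^ (s.2.val + 1) = 0 := by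
        intro s
        by_cases h : q₁ s.1 = j
        · have hlt : q₀ s.1 < j := by rw [← h]; simp [q₀, q₁, Fin.lt_def]
          rw [hmin _ hlt, zero_pow (hp0 _), zero_mul]
        · rw [Pi.single_eq_of_ne h, zero_pow (hp0 _), mul_zero]
      simp [c, g, ι, Fintype.sum_sum_type, hs]
      rw [Finset.sum_eq_single j]
      · simp; field_simp
      · intro j' _ hj'
        rw [Pi.single_eq_of_ne hj', mul_zero]
      · simp
  · intro y z h
    ext i
    have := congrFun h (.inl (Fin.natAdd m i))
    simpa [φ] using this
  · intro x
    constructor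
    · rintro ⟨y, rfl⟩ α
      refine ⟨(Fin.addCases (fun _ => 0) (α • y), 0), ?_⟩
      rw [← map_smul]
      ext (j | s | i)
      · rfl
      · have : q₀ s.1 = Fin.castAdd κ s.1 := rfl
        simp [φ, c, this, hz0]
      · simp [φ, c]
    · intro hx
      have hxl : ∀ j : Fin m, x (.inl (Fin.castAdd κ j)) = 0 := by
        intro j
        by_contra hne
        have hnj := hn j
        -- Scaling by `y` multiplies the `p`-th power slot by `y`, not by `y ^ p`.
        obtain ⟨y, hy⟩ := exists_pow_ne (p := p) (i := 0) hL (by omega)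
        obtain ⟨v, hv⟩ := hx 1
        obtain ⟨v', hv'⟩ := hx y
        let s : Σ j : Fin m, Fin (n j) := ⟨j, ⟨0, by omega⟩⟩
        have h1 : x (.inl (q₀ j)) = v.1 (q₀ j) := by simpa [c] using congrFun hv (.inl (q₀ j))
        have h2 : y * x (.inl (q₀ j)) = v'.1 (q₀ j) := by
          simpa [c] using congrFun hv' (.inl (q₀ j))
        have h3 : x (.inr (.inl s)) = v.1 (q₀ j) ^ p ^ (0 + 1) := by
          exact (by simp : x (.inr (.inl s)) = ((1 : L) • x) (.inr (.inl s))).trans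
            (congrFun hv (.inr (.inl s)))
        have h4 : y * x (.inr (.inl s)) = v'.1 (q₀ j) ^ p ^ (0 + 1) := by
          exact congrFun hv' (.inr (.inl s))
        rw [h3, ← h1, ← h2, mul_pow] at h4
        exact hy (mul_right_cancel₀ (pow_ne_zero _ hne) h4).symm
      have hxs : ∀ s, x (.inr (.inl s)) = 0 := by
        intro s
        obtain ⟨v, hv⟩ := hx 1
        have h1 : x (.inl (q₀ s.1)) = v.1 (q₀ s.1) := by
          simpa [c] using congrFun hv (.inl (q₀ s.1))
        have h3 : x (.inr (.inl s)) = v.1 (q₀ s.1) ^ p ^ (s.2.val + 1) := by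
          simpa [c] using congrFun hv (.inr (.inl s))
        rw [h3, ← h1, show q₀ s.1 = Fin.castAdd κ s.1 from rfl, hxl, zero_pow (hp0 _)]
      have hxi : ∀ i, x (.inr (.inr i)) = 0 := by
        intro i
        by_contra hne
        obtain ⟨y, hy⟩ := exists_pow_ne (p := p) (i := 0) hL (by omega)
        obtain ⟨v, hv⟩ := hx 1
        obtain ⟨v', hv'⟩ := hx y
        have h1 : x (.inr (.inr i)) = algebraMap (ZMod p) L (v.2 i) := by
          simpa [c] using congrFun hv (.inr (.inr i))
        have h2 : y * x (.inr (.inr i)) = algebraMap (ZMod p) L (v'.2 i) := by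
          simpa [c] using congrFun hv' (.inr (.inr i))
        have h3 : y = algebraMap (ZMod p) L (v'.2 i / v.2 i) := by
          rw [map_div₀, ← h1, ← h2, mul_div_cancel_right₀ _ hne]
        apply hy
        rw [h3, ← map_pow, zero_add, pow_one, ZMod.pow_card]
      refine ⟨fun i => x (.inl (Fin.natAdd m i)), ?_⟩
      ext (j | s | i)
      · refine Fin.addCases (fun j => ?_) (fun j => ?_) j
        · simp [φ, hxl]
        · simp [φ]
      · simp [φ, hxs]
      · simp [φ, hxi]

theorem exists_powerBasis (p d : ℕ) [Fact p.Prime] (hd : d ≠ 0) :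
    ∃ pb : PowerBasis (ZMod p) (GaloisField p d), pb.dim = d := by
  have : Algebra.IsSeparable (ZMod p) (GaloisField p d) :=
    Algebra.IsAlgebraic.isSeparable_of_perfectField
  let pb := Field.powerBasisOfFiniteOfSeparable (ZMod p) (GaloisField p d)
  exact ⟨pb, by rw [← pb.finrank, GaloisField.finrank p hd]⟩

theorem stmt15 (p e t k r : ℕ) [Fact p.Prime] (he : 1 < e) (ht : e < t)
    (hk₁ : 2 ≤ k) (hk₂ : k ≤ t / e)
    (hr₁ : (if e ∣ t then 2 * ((t / e : ℕ) : ℤ) - k + 2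
            else 2 * ((t / e : ℕ) : ℤ) - k + t + e - ((t / e : ℕ) : ℤ) * e) ≤ (r : ℤ))
    (hr₂ : (r : ℤ) ≤ 1 + t - ((e : ℤ) - 1) * ((k : ℤ) - 1)) :
    ∃ H : Matrix (Fin (p ^ t)) (Fin (p ^ t)) (GaloisField p e),
      IsGH (p ^ (t - e)) H ∧ IsNormalized H ∧ IsFpAdditive p (ghCode H) ∧
      kerDim (GaloisField p e) (ghCode H) = k ∧
      rankC (GaloisField p e) (ghCode H) = r := by
  have hL : Nat.card (GaloisField p e) = p ^ e := GaloisField.card p e (by omega)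
  obtain ⟨κ, rfl⟩ : ∃ κ, k = κ + 1 := ⟨k - 1, by omega⟩
  have hdiv := Nat.div_add_mod t e
  have hmod := Nat.mod_lt t (show 0 < e by omega)
  obtain ⟨e', rfl⟩ : ∃ e', e = e' + 1 := ⟨e - 1, by omega⟩
  generalize hh : t / (e' + 1) = h at *
  generalize hs : t % (e' + 1) = s at *
  by_cases hd : (e' + 1) ∣ t
  · have hs0 : s = 0 := by rw [← hs]; exact Nat.mod_eq_zero_of_dvd hd
    subst hs0
    rw [if_pos hd] at hr₁
    obtain ⟨m, rfl⟩ : ∃ m, h = m + κ := ⟨h - κ, by omega⟩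
    obtain ⟨N, rfl⟩ : ∃ N, r = (m + κ) + N + 1 := ⟨r - (m + κ) - 1, by omega⟩
    obtain ⟨n, hn, hsum⟩ := exists_counts (e' + 1) m N (by push_cast at hr₁; omega) (by
      subst hdiv
      push_cast at hr₂
      zify
      simp only [Nat.add_sub_cancel]
      nlinarith)
    have := construction hL he (by omega : 1 ≤ κ) n hn (0 : Matrix (Fin 0) (Fin 0) _)
      (fun v hv => (hv (Subsingleton.elim _ _)).elim) (fun x _ => Subsingleton.elim _ _)
      (t := t) (by omega)
    rw [hsum] at this
    exact this
  · have hs0 : s ≠ 0 := fun h0 => hd (Nat.dvd_of_mod_eq_zero (hs.trans h0))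
    rw [if_neg hd] at hr₁
    obtain ⟨m, rfl⟩ : ∃ m, h = m + κ + 1 := ⟨h - κ - 1, by omega⟩
    have hτ : (e' + 1) * (m + κ) + (e' + 1 + s) = t := by rw [← hdiv]; ring
    -- the block has size `τ = e + s`, with `s = t % e`
    obtain ⟨N, rfl⟩ : ∃ N, r = (m + κ) + N + (e' + 1 + s) + 1 :=
      ⟨r - (m + κ) - (e' + 1 + s) - 1, by
        have : ((m + κ : ℕ) : ℤ) + (e' + 1 + s : ℕ) + 1 ≤ r := by
          subst hτ
          push_cast at hr₁ ⊢
          nlinarith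
        omega⟩
    obtain ⟨n, hn, hsum⟩ := exists_counts (e' + 1) m N (by
        subst hτ
        push_cast at hr₁
        zify
        nlinarith) (by
      subst hτ
      push_cast at hr₂
      zify
      simp only [Nat.add_sub_cancel]
      nlinarith)
    obtain ⟨pL, hpL⟩ := exists_powerBasis p (e' + 1) (by omega)
    obtain ⟨pE, hpE⟩ := exists_powerBasis p (e' + 1 + s) (by omega)
    have hT := block_exists pL pE (by omega)
    rw [hpE] at hT
    obtain ⟨T, hT₁, hT₂⟩ := hT
    have := construction hL he (by omega : 1 ≤ κ) n hn T hT₁ hT₂ hτ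
    rw [hsum] at this
    exact this
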